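/- Let n ≥ 2 and let E be the symmetric star side-information digraph on Fin n with center 0: E i j holds if and only if i ≠ j and (i = 0 or j = 0). Then the minimal index code length satisfies ℓ*(E) = n − 1. -/

import Mathlib

/-- A matrix `A` over `ZMod 2` fits the side-information digraph `E` if it has ones on the
diagonal and zeros at all off-diagonal non-edge positions. -/
def Fits {n : ℕ} (E : Fin n → Fin n → Prop) (A : Matrix (Fin n) (Fin n) (ZMod 2)) : Prop :=
  (∀ i, A i i = 1) ∧ ∀ i j, i ≠ j → ¬E i j → A i j = 0

/-- `minrk₂` of a side-information digraph: the minimum `ZMod 2` rank over matrices fitting it. -/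
noncomputable def minrk2 {n : ℕ} (E : Fin n → Fin n → Prop) : ℕ :=
  sInf {r : ℕ | ∃ A : Matrix (Fin n) (Fin n) (ZMod 2), Fits E A ∧ A.rank = r}

/-- `Enc` is (the encoding map of) an index code of length `ℓ` for the side-information
digraph `E`: every client `i` can decode `x i` from the encoded word and the restriction of
`x` to its side information `{j | E i j}`. -/
def IsIndexCode {n ℓ : ℕ} (E : Fin n → Fin n → Prop)
    (Enc : (Fin n → ZMod 2) → (Fin ℓ → ZMod 2)) : Prop :=
  ∃ Dec : (i : Fin n) → (Fin ℓ → ZMod 2) → ({j : Fin n // E i j} → ZMod 2) → ZMod 2,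
    ∀ (x : Fin n → ZMod 2) (i : Fin n), Dec i (Enc x) (fun j => x j.1) = x i

/-- There is an index code of length `ℓ` for `E`. -/
def HasIndexCode {n : ℕ} (E : Fin n → Fin n → Prop) (ℓ : ℕ) : Prop :=
  ∃ Enc : (Fin n → ZMod 2) → (Fin ℓ → ZMod 2), IsIndexCode E Enc

/-- There is a linear index code of length `ℓ` for `E`. -/
def HasLinearIndexCode {n : ℕ} (E : Fin n → Fin n → Prop) (ℓ : ℕ) : Prop :=
  ∃ Enc : (Fin n → ZMod 2) → (Fin ℓ → ZMod 2),
    IsLinearMap (ZMod 2) Enc ∧ IsIndexCode E Enc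

/-- The minimal index code length `ℓ*(E)`. -/
noncomputable def minIndexCodeLength {n : ℕ} (E : Fin n → Fin n → Prop) : ℕ :=
  sInf {ℓ : ℕ | HasIndexCode E ℓ}

/-- A directed cycle of `E`: a list of at least two distinct vertices with an edge from each
vertex to the cyclically next one. -/
def IsDirCycle {n : ℕ} (E : Fin n → Fin n → Prop) (c : List (Fin n)) : Prop :=
  2 ≤ c.length ∧ c.Nodup ∧
    ∀ t : Fin c.length,
      E (c.get t) (c.get ⟨(t.1 + 1) % c.length, Nat.mod_lt _ t.pos⟩)

/-!
Transmitting only the parity of each clique of mutually informed clients is a valid index code,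
since a client knows every other summand of its own parity. Conversely, on messages vanishing
outside an acyclic set of clients the code word alone determines everything: following the acyclic
order, each client in turn finds its side information already determined. In the star, the cliques
are `{0, 1}` and the remaining singletons, while the `n - 1` leaves form an acyclic set.
-/

section IndexCode

variable {n ℓ : ℕ} {E : Fin n → Fin n → Prop}

theorem isIndexCode_iff {Enc : (Fin n → ZMod 2) → (Fin ℓ → ZMod 2)} :
    IsIndexCode E Enc ↔
      ∀ i x y, Enc x = Enc y → (∀ j, E i j → x j = y j) → x i = y i := by
  constructor
  · rintro ⟨Dec, hDec⟩ i x y hEnc hside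
    have hrestrict : (fun j : {j // E i j} => x j.1) = fun j => y j.1 :=
      funext fun j => hside j.1 j.2
    rw [← hDec x i, ← hDec y i, hEnc, hrestrict]
  · intro h
    have hfactor (i : Fin n) :
        (fun x : Fin n → ZMod 2 => x i).FactorsThrough
          fun x => (Enc x, fun j : {j // E i j} => x j.1) := fun x y hxy =>
      h i x y (congrArg Prod.fst hxy) fun j hj => congrFun (congrArg Prod.snd hxy) ⟨j, hj⟩
    choose Dec hDec using fun i => (Function.factorsThrough_iff _).1 (hfactor i)
    exact ⟨fun i w s => Dec i (w, s), fun x i => (congrFun (hDec i) x).symm⟩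

theorem hasIndexCode_of_cliqueCover (f : Fin n → Fin ℓ)
    (hf : ∀ i j, f i = f j → i ≠ j → E i j) : HasIndexCode E ℓ := by
  refine ⟨fun x k => ∑ j with f j = k, x j, isIndexCode_iff.2 fun i x y hEnc hside => ?_⟩
  have hi : i ∈ Finset.univ.filter fun j => f j = f i := by simp
  have hparity : ∑ j with f j = f i, x j = ∑ j with f j = f i, y j := congrFun hEnc (f i)
  have hothers : ∑ j ∈ (Finset.univ.filter fun j => f j = f i).erase i, x j =
      ∑ j ∈ (Finset.univ.filter fun j => f j = f i).erase i, y j := by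
    refine Finset.sum_congr rfl fun j hj => hside j ?_
    obtain ⟨hji, hj⟩ := Finset.mem_erase.1 hj
    exact hf i j (Finset.mem_filter.1 hj).2.symm hji.symm
  rw [← Finset.add_sum_erase _ x hi, ← Finset.add_sum_erase _ y hi, hothers] at hparity
  exact add_right_cancel hparity

-- On a finite set of clients, well-foundedness of `Function.swap E` is acyclicity of `E`.
theorem IsIndexCode.eq_of_wellFoundedOn {Enc : (Fin n → ZMod 2) → (Fin ℓ → ZMod 2)}
    (hEnc : IsIndexCode E Enc) {S : Set (Fin n)} (hS : S.WellFoundedOn (Function.swap E))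
    {x y : Fin n → ZMod 2} (hxy : Enc x = Enc y) (hoff : ∀ i ∉ S, x i = y i) : x = y := by
  funext i
  by_cases hi : i ∈ S
  · refine hS.induction hi fun i _ ih => isIndexCode_iff.1 hEnc i x y hxy fun j hj => ?_
    by_cases hjS : j ∈ S
    · exact ih j hjS hj
    · exact hoff j hjS
  · exact hoff i hi

theorem HasIndexCode.card_le_of_wellFoundedOn (hE : HasIndexCode E ℓ) (S : Finset (Fin n))
    (hS : (S : Set (Fin n)).WellFoundedOn (Function.swap E)) : S.card ≤ ℓ := by
  obtain ⟨Enc, hEnc⟩ := hE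
  let extendZero (u : S → ZMod 2) : Fin n → ZMod 2 := Function.extend Subtype.val u 0
  have hoff (u v : S → ZMod 2) (i : Fin n) (hi : i ∉ (S : Set (Fin n))) :
      extendZero u i = extendZero v i := by
    have hrange : ¬∃ j : S, (j : Fin n) = i := fun ⟨j, hj⟩ => hi (hj ▸ j.2)
    simp only [extendZero, Function.extend_apply' _ _ _ hrange]
  have hinj : Function.Injective (Enc ∘ extendZero) := fun u v huv =>
    Function.extend_injective Subtype.val_injective (0 : Fin n → ZMod 2)
      (hEnc.eq_of_wellFoundedOn hS huv (hoff u v))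
  have hcard : 2 ^ S.card ≤ 2 ^ ℓ := by
    simpa using Fintype.card_le_of_injective _ hinj
  exact (Nat.pow_le_pow_iff_right one_lt_two).1 hcard

end IndexCode

/-- For the symmetric star side-information digraph on `Fin n` (`n ≥ 2`) with center `0`,
the minimal index code length is `n - 1`. -/
theorem minIndexCodeLength_star
    (n : ℕ) (hn : 2 ≤ n) :
    minIndexCodeLength
      (fun i j : Fin n => i ≠ j ∧ ((i : ℕ) = 0 ∨ (j : ℕ) = 0)) = n - 1 := by
  refine IsLeast.csInf_eq ⟨?_, fun ℓ hℓ => ?_⟩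
  · -- Truncated subtraction puts `0` and `1` in one clique and every other client alone.
    refine hasIndexCode_of_cliqueCover (fun i => ⟨i - 1, by omega⟩) fun i j hij hne => ⟨hne, ?_⟩
    simp only [Fin.mk.injEq] at hij
    omega
  · have : NeZero n := ⟨by omega⟩
    have hleaves : ((Finset.univ.erase (0 : Fin n) : Finset (Fin n)) : Set (Fin n)).WellFoundedOn
        (Function.swap fun i j : Fin n => i ≠ j ∧ ((i : ℕ) = 0 ∨ (j : ℕ) = 0)) := by
      refine ⟨fun i => ⟨i, fun j ⟨_, h⟩ => ?_⟩⟩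
      have hi := Finset.ne_of_mem_erase i.2
      have hj := Finset.ne_of_mem_erase j.2
      exact (h.elim (Fin.val_ne_zero_iff.2 hi) (Fin.val_ne_zero_iff.2 hj)).elim
    simpa using hℓ.card_le_of_wellFoundedOn _ hleaves
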